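/- arXiv:2308.00895 — 2 statements merged into one kernel-verified Lean document; each statement's English description precedes it below -/
import Mathlib

section
/- Let (X, B, P_0) be a probability space and {P_θ : θ ∈ Θ} a family of probability measures, each absolutely continuous with respect to P_0. The family is boundedly complete if and only if the linear span of {dP_θ/dP_0 : θ ∈ Θ} is dense in L¹(P_0). -/
open MeasureTheory

/-- Riesz representation for the dual of `L¹` of a probability space. -/
theorem farrell_dual_repr {X : Type*} [MeasurableSpace X] (P0 : Measure X)
    [IsProbabilityMeasure P0] (φ : Lp ℝ 1 P0 →L[ℝ] ℝ) :
    ∃ Y : X → ℝ, Measurable Y ∧ (∀ᵐ x ∂P0, |Y x| ≤ ‖φ‖) ∧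
      ∀ f : Lp ℝ 1 P0, φ f = ∫ x, Y x * f x ∂P0 := by
  have h12 : (1 : ENNReal) ≤ 2 := by norm_num
  let T0 : Lp ℝ 2 P0 →ₗ[ℝ] Lp ℝ 1 P0 :=
    { toFun := fun f => ⟨f.1, Lp.antitone h12 f.2⟩
      map_add' := fun _ _ => rfl
      map_smul' := fun _ _ => rfl }
  let T : Lp ℝ 2 P0 →L[ℝ] Lp ℝ 1 P0 := T0.mkContinuous 1 (by
    intro f
    rw [one_mul, Lp.norm_def, Lp.norm_def]
    refine ENNReal.toReal_mono (Lp.eLpNorm_ne_top f) ?_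
    exact eLpNorm_le_eLpNorm_of_exponent_le h12 (Lp.aestronglyMeasurable f))
  let y : Lp ℝ 2 P0 := (InnerProductSpace.toDual ℝ (Lp ℝ 2 P0)).symm (φ.comp T)
  have hy : ∀ f : Lp ℝ 2 P0, inner ℝ y f = φ (T f) := fun f => by
    simp [y, InnerProductSpace.toDual_symm_apply]
  have hyint : Integrable y P0 := (Lp.memLp y).integrable h12
  have hset : ∀ (s : Set X) (hs : MeasurableSet s),
      φ (indicatorConstLp 1 hs (measure_ne_top P0 s) (1 : ℝ)) = ∫ x in s, y x ∂P0 := by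
    intro s hs
    have h := hy (indicatorConstLp 2 hs (measure_ne_top P0 s) (1 : ℝ))
    rw [real_inner_comm, L2.inner_indicatorConstLp_one] at h
    rw [h]
    rfl
  have habs : ∀ (s : Set X), MeasurableSet s → |∫ x in s, y x ∂P0| ≤ ‖φ‖ * P0.real s := by
    intro s hs
    rw [← hset s hs, ← Real.norm_eq_abs]
    refine (φ.le_opNorm _).trans ?_
    rw [norm_indicatorConstLp (by norm_num) (by norm_num)]
    simp
  have hbd : ∀ᵐ x ∂P0, |y x| ≤ ‖φ‖ := by
    have h1 : (y : X → ℝ) ≤ᵐ[P0] fun _ => ‖φ‖ := by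
      refine ae_le_of_forall_setIntegral_le hyint (integrable_const _) fun s hs _ => ?_
      rw [setIntegral_const, smul_eq_mul, mul_comm]
      exact (le_abs_self _).trans (habs s hs)
    have h2 : (fun _ => -‖φ‖) ≤ᵐ[P0] (y : X → ℝ) := by
      refine ae_le_of_forall_setIntegral_le (integrable_const _) hyint fun s hs _ => ?_
      rw [setIntegral_const, smul_eq_mul]
      have := (abs_le.1 (habs s hs)).1
      linarith
    filter_upwards [h1, h2] with x a b
    exact abs_le.2 ⟨b, a⟩
  have hmeas : Measurable y := (Lp.stronglyMeasurable y).measurable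
  have hint : ∀ f : Lp ℝ 1 P0, Integrable (fun x => y x * f x) P0 := fun f =>
    (L1.integrable_coeFn f).bdd_mul (c := ‖φ‖) hmeas.aestronglyMeasurable hbd
  refine ⟨y, hmeas, hbd, ?_⟩
  let ψ0 : Lp ℝ 1 P0 →ₗ[ℝ] ℝ :=
    { toFun := fun f => ∫ x, y x * f x ∂P0
      map_add' := fun f g => by
        rw [← integral_add (hint f) (hint g)]
        refine integral_congr_ae ?_
        filter_upwards [Lp.coeFn_add f g] with x hx
        rw [hx, Pi.add_apply, mul_add]
      map_smul' := fun c f => by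
        rw [RingHom.id_apply, smul_eq_mul, ← integral_const_mul]
        refine integral_congr_ae ?_
        filter_upwards [Lp.coeFn_smul c f] with x hx
        rw [hx, Pi.smul_apply, smul_eq_mul]
        ring }
  let ψ : Lp ℝ 1 P0 →L[ℝ] ℝ := ψ0.mkContinuous ‖φ‖ (by
    intro f
    rw [L1.norm_eq_integral_norm, ← integral_const_mul]
    refine norm_integral_le_of_norm_le ((L1.integrable_coeFn f).norm.const_mul _) ?_
    filter_upwards [hbd] with x hx
    rw [norm_mul]
    exact mul_le_mul_of_nonneg_right hx (norm_nonneg _))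
  intro f
  change φ f = ψ f
  refine Lp.induction (by norm_num) (motive := fun f => φ f = ψ f) ?_ ?_ ?_ f
  · intro c s hs hμs
    have e : (Lp.simpleFunc.indicatorConst 1 hs hμs.ne c : Lp ℝ 1 P0)
        = c • indicatorConstLp 1 hs (measure_ne_top P0 s) (1 : ℝ) := by
      rw [Lp.simpleFunc.coe_indicatorConst]
      ext1
      filter_upwards [indicatorConstLp_coeFn (p := 1) (hs := hs) (hμs := hμs.ne) (c := c),
        Lp.coeFn_smul c (indicatorConstLp 1 hs (measure_ne_top P0 s) (1 : ℝ)),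
        indicatorConstLp_coeFn (p := 1) (hs := hs) (hμs := measure_ne_top P0 s)
          (c := (1 : ℝ))] with x h1 h2 h3
      rw [h1, h2, Pi.smul_apply, h3]
      by_cases hx : x ∈ s <;> simp [hx]
    rw [e, map_smul, map_smul, hset s hs]
    congr 1
    change _ = ∫ x, y x * _ ∂P0
    rw [← integral_indicator hs]
    refine integral_congr_ae ?_
    filter_upwards [indicatorConstLp_coeFn (p := 1) (hs := hs) (hμs := measure_ne_top P0 s)
          (c := (1 : ℝ))] with x h3
    rw [h3]
    by_cases hx : x ∈ s <;> simp [hx]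
  · intro f g hf hg _ h1 h2
    rw [map_add, map_add, h1, h2]
  · exact isClosed_eq φ.continuous ψ.continuous

/-- Farrell's characterization: a dominated family `{P_θ}` is boundedly complete
iff the linear span of the likelihood ratios `dP_θ/dP_0` is dense in `L¹(P_0)`. -/
theorem farrell_boundedly_complete_iff_dense
    {X : Type*} [MeasurableSpace X] {Θ : Type*}
    (P0 : Measure X) [IsProbabilityMeasure P0]
    (P : Θ → Measure X) [∀ θ, IsProbabilityMeasure (P θ)]
    (hac : ∀ θ, P θ ≪ P0) :
    (∀ Y : X → ℝ, Measurable Y → (∃ M : ℝ, ∀ᵐ x ∂P0, |Y x| ≤ M) →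
        (∀ θ : Θ, ∫ x, Y x ∂(P θ) = 0) → Y =ᵐ[P0] 0)
      ↔ (∀ f : X → ℝ, Integrable f P0 → ∀ ε > 0,
          ∃ g ∈ Submodule.span ℝ
            {h : X → ℝ | ∃ θ : Θ, h = fun x => ((P θ).rnDeriv P0 x).toReal},
            ∫ x, |f x - g x| ∂P0 < ε) := by
  have hD : ∀ θ, Integrable (fun x => ((P θ).rnDeriv P0 x).toReal) P0 := fun θ =>
    Measure.integrable_toReal_rnDeriv
  constructor
  · intro hbc f hf ε hε
    let S : Submodule ℝ (Lp ℝ 1 P0) := Submodule.span ℝ (Set.range fun θ => (hD θ).toL1 _)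
    have hS : ∀ s ∈ S, ∃ g ∈ Submodule.span ℝ
        {h : X → ℝ | ∃ θ : Θ, h = fun x => ((P θ).rnDeriv P0 x).toReal}, s =ᵐ[P0] g := by
      intro s hs
      induction hs using Submodule.span_induction with
      | mem x hx =>
        obtain ⟨θ, rfl⟩ := hx
        exact ⟨_, Submodule.subset_span ⟨θ, rfl⟩, (hD θ).coeFn_toL1⟩
      | zero => exact ⟨0, Submodule.zero_mem _, Lp.coeFn_zero _ _ _⟩
      | add a b _ _ ha hb =>
        obtain ⟨g, hg, h1⟩ := ha
        obtain ⟨g', hg', h2⟩ := hb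
        exact ⟨g + g', Submodule.add_mem _ hg hg', (Lp.coeFn_add a b).trans (h1.add h2)⟩
      | smul c a _ ha =>
        obtain ⟨g, hg, h1⟩ := ha
        exact ⟨c • g, Submodule.smul_mem _ c hg,
          (Lp.coeFn_smul c a).trans (h1.const_smul c)⟩
    have hmem : hf.toL1 f ∈ closure (S : Set (Lp ℝ 1 P0)) := by
      by_contra hcon
      obtain ⟨φ, u, h1, h2⟩ := geometric_hahn_banach_point_closed
        (S.convex.closure) isClosed_closure hcon
      have hu : u < 0 := by
        simpa using h2 0 (subset_closure S.zero_mem)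
      have hz : ∀ s ∈ S, φ s = 0 := by
        intro s hs
        by_contra hne
        have := h2 (((u - 1) / φ s) • s) (subset_closure (S.smul_mem _ hs))
        rw [map_smul, smul_eq_mul, div_mul_cancel₀ _ hne] at this
        linarith
      obtain ⟨Y, hYm, hYb, hY⟩ := farrell_dual_repr P0 φ
      have hY0 : Y =ᵐ[P0] 0 := by
        refine hbc Y hYm ⟨_, hYb⟩ fun θ => ?_
        rw [← integral_toReal_rnDeriv_mul (hac θ), ← hz _ (Submodule.subset_span ⟨θ, rfl⟩), hY]
        refine integral_congr_ae ?_
        filter_upwards [(hD θ).coeFn_toL1] with x hx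
        rw [hx, mul_comm]
      have : φ (hf.toL1 f) = 0 := by
        rw [hY]
        refine integral_eq_zero_of_ae ?_
        filter_upwards [hY0] with x hx
        simp [hx]
      linarith
    obtain ⟨s, hs, hd⟩ := Metric.mem_closure_iff.1 hmem ε hε
    obtain ⟨g, hg, hsg⟩ := hS s hs
    refine ⟨g, hg, ?_⟩
    rw [dist_eq_norm, L1.norm_eq_integral_norm] at hd
    refine lt_of_eq_of_lt (integral_congr_ae ?_) hd
    filter_upwards [hsg, hf.coeFn_toL1, Lp.coeFn_sub (hf.toL1 f) s] with x h1 h2 h3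
    rw [h3, Pi.sub_apply, h1, h2, Real.norm_eq_abs]
  · rintro hd Y hYm ⟨M, hM⟩ hY0
    have hmul : ∀ h : X → ℝ, Integrable h P0 → Integrable (fun x => Y x * h x) P0 := fun h hh =>
      hh.bdd_mul (c := M) hYm.aestronglyMeasurable hM
    have hYi : Integrable Y P0 := by simpa using hmul (fun _ => 1) (integrable_const _)
    have hspan : ∀ g ∈ Submodule.span ℝ
        {h : X → ℝ | ∃ θ : Θ, h = fun x => ((P θ).rnDeriv P0 x).toReal},
        Integrable g P0 ∧ ∫ x, Y x * g x ∂P0 = 0 := by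
      intro g hg
      induction hg using Submodule.span_induction with
      | mem x hx =>
        obtain ⟨θ, rfl⟩ := hx
        refine ⟨hD θ, ?_⟩
        rw [← hY0 θ, ← integral_toReal_rnDeriv_mul (hac θ)]
        simp only [mul_comm]
      | zero => exact ⟨integrable_zero _ _ _, by simp⟩
      | add a b _ _ ha hb =>
        refine ⟨ha.1.add hb.1, ?_⟩
        simp only [Pi.add_apply, mul_add]
        rw [integral_add (hmul a ha.1) (hmul b hb.1), ha.2, hb.2, add_zero]
      | smul c a _ ha =>
        refine ⟨ha.1.smul c, ?_⟩
        simp only [Pi.smul_apply, smul_eq_mul, mul_left_comm _ c]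
        rw [integral_const_mul, ha.2, mul_zero]
    have hle : ∀ ε > 0, ∫ x, Y x * Y x ∂P0 ≤ 0 + ε := by
      intro ε hε
      have hpos : 0 < |M| + 1 := by positivity
      obtain ⟨g, hg, hlt⟩ := hd Y hYi (ε / (|M| + 1)) (by positivity)
      obtain ⟨hgi, hg0⟩ := hspan g hg
      have e : ∫ x, Y x * Y x ∂P0 = ∫ x, Y x * (Y x - g x) ∂P0 := by
        simp only [mul_sub]
        rw [integral_sub (hmul _ hYi) (hmul _ hgi), hg0, sub_zero]
      rw [e, zero_add]
      calc ∫ x, Y x * (Y x - g x) ∂P0 ≤ ∫ x, (|M| + 1) * |Y x - g x| ∂P0 := by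
            refine integral_mono_ae (hmul _ (hYi.sub hgi)) ((hYi.sub hgi).abs.const_mul _) ?_
            filter_upwards [hM] with x hx
            refine (le_abs_self _).trans ?_
            rw [abs_mul]
            refine mul_le_mul_of_nonneg_right ?_ (abs_nonneg _)
            linarith [le_abs_self M]
        _ = (|M| + 1) * ∫ x, |Y x - g x| ∂P0 := integral_const_mul _ _
        _ ≤ (|M| + 1) * (ε / (|M| + 1)) := mul_le_mul_of_nonneg_left hlt.le hpos.le
        _ = ε := mul_div_cancel₀ _ hpos.ne'
    have h0 : ∫ x, Y x * Y x ∂P0 = 0 :=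
      le_antisymm (le_of_forall_pos_le_add hle) (integral_nonneg fun x => mul_self_nonneg _)
    have := (integral_eq_zero_iff_of_nonneg (fun x => mul_self_nonneg (Y x)) (hmul _ hYi)).1 h0
    filter_upwards [this] with x hx
    exact mul_self_eq_zero.1 hx
end

section
/- Let {N(μ, I_n) : μ ∈ ℝⁿ} be the Gaussian shift family on ℝⁿ with P_0 = N(0, I_n). Then the linear span of the likelihood ratios x ↦ exp(μᵀx − |μ|²/2), μ ∈ ℝⁿ, is dense in L¹(ℝⁿ, N(0, I_n)). -/
open MeasureTheory Real

/-- The standard Gaussian measure `N(0, I_n)` on `ℝⁿ`. -/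
noncomputable def stdGaussian (n : ℕ) : Measure (Fin n → ℝ) :=
  volume.withDensity fun x =>
    ENNReal.ofReal ((2 * π) ^ (-(n : ℝ) / 2) * Real.exp (-(∑ i, x i ^ 2) / 2))

/-- The exponential of a linear form is integrable for the standard Gaussian. -/
lemma integrable_exp_stdGaussian (n : ℕ) (c : Fin n → ℝ) :
    Integrable (fun x : Fin n → ℝ => Real.exp (∑ i, c i * x i)) (stdGaussian n) := by
  unfold stdGaussian
  rw [integrable_withDensity_iff_integrable_smul' (by fun_prop) (by simp)]
  have h := GaussianFourier.integrable_cexp_neg_mul_sum_add (b := (1 / 2 : ℂ)) (by norm_num)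
    (fun i : Fin n => (c i : ℂ))
  have h2 := (h.norm).const_mul ((2 * π) ^ (-(n : ℝ) / 2))
  refine h2.congr (Filter.Eventually.of_forall fun x => ?_)
  have e : (-(1 / 2 : ℂ) * ∑ i, (x i : ℂ) ^ 2 + ∑ i, (c i : ℂ) * x i)
      = ((-(∑ i, x i ^ 2) / 2 + ∑ i, c i * x i : ℝ) : ℂ) := by
    push_cast; ring
  simp only [smul_eq_mul]
  rw [ENNReal.toReal_ofReal (by positivity), e, Complex.norm_exp_ofReal, Real.exp_add]
  ring

instance isFiniteMeasure_stdGaussian_aux (n : ℕ) : IsFiniteMeasure (stdGaussian n) := by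
  have h := integrable_exp_stdGaussian n 0
  simp only [Pi.zero_apply, zero_mul, Finset.sum_const_zero, Real.exp_zero] at h
  rcases integrable_const_iff.1 h with h | h
  · norm_num at h
  · exact h

lemma memLp_exp_stdGaussian (n : ℕ) (c : Fin n → ℝ) :
    MemLp (fun x : Fin n → ℝ => Real.exp (∑ i, c i * x i - (∑ i, c i ^ 2) / 2)) 2
      (stdGaussian n) := by
  rw [memLp_two_iff_integrable_sq (Continuous.aestronglyMeasurable (by fun_prop))]
  have h := (integrable_exp_stdGaussian n (fun i => 2 * c i)).mul_const
    (Real.exp (-(∑ i, c i ^ 2)))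
  refine h.congr (Filter.Eventually.of_forall fun x => ?_)
  simp only
  rw [← Real.exp_add, ← Real.exp_nat_mul]
  congr 1
  simp only [mul_assoc, ← Finset.mul_sum]
  push_cast
  ring

/-- Finite measures on `ℝⁿ` with equal, everywhere finite Laplace transforms coincide. -/
lemma measure_eq_of_laplace (n : ℕ) (P Q : Measure (Fin n → ℝ)) [IsFiniteMeasure P]
    [IsFiniteMeasure Q]
    (hP : ∀ c : Fin n → ℝ, Integrable (fun x => Real.exp (∑ i, c i * x i)) P)
    (hPQ : ∀ c : Fin n → ℝ, ∫ x, Real.exp (∑ i, c i * x i) ∂P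
      = ∫ x, Real.exp (∑ i, c i * x i) ∂Q) : P = Q := by
  refine Measure.ext_of_charFunDual (funext fun L => ?_)
  have hL : ∀ x, L x = ∑ i, L (Pi.single i 1) * x i := by
    intro x
    conv_lhs => rw [pi_eq_sum_univ' x]
    simp [map_sum, mul_comm]
  have hLt : ∀ (t : ℝ) x, t * L x = ∑ i, (t * L (Pi.single i 1)) * x i := by
    intro t x
    rw [hL, Finset.mul_sum]
    simp only [mul_assoc]
  have hE : ∀ t : ℝ, (fun x => Real.exp (t * L x))
      = fun x => Real.exp (∑ i, (t * L (Pi.single i 1)) * x i) :=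
    fun t => funext fun x => by rw [hLt]
  have hm : ProbabilityTheory.mgf L P = ProbabilityTheory.mgf L Q := by
    funext t
    simp only [ProbabilityTheory.mgf]
    rw [hE]
    exact hPQ _
  have h0 : P = 0 ↔ Q = 0 := by
    have := hPQ 0
    simp only [Pi.zero_apply, zero_mul, Finset.sum_const_zero, Real.exp_zero, integral_const,
      smul_eq_mul, mul_one] at this
    rw [← Measure.measure_univ_eq_zero, ← Measure.measure_univ_eq_zero (μ := Q),
      ← measureReal_eq_zero_iff, this, measureReal_eq_zero_iff]
  have hset : ProbabilityTheory.integrableExpSet L P = Set.univ := by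
    ext t
    simp only [ProbabilityTheory.integrableExpSet, Set.mem_univ, iff_true]
    change Integrable (fun x => Real.exp (t * L x)) P
    rw [hE]
    exact hP _
  have hI := ProbabilityTheory.eqOn_complexMGF_of_mgf' hm h0 (x := Complex.I)
    (by simp [hset])
  simp only [ProbabilityTheory.complexMGF] at hI
  simp only [charFunDual_apply, mul_comm _ Complex.I]
  exact hI

/-- Bounded-completeness type statement in `L²`. -/
lemma ae_zero_of_orth (n : ℕ) (h : (Fin n → ℝ) → ℝ) (hh : MemLp h 2 (stdGaussian n))
    (horth : ∀ c : Fin n → ℝ,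
      ∫ x, Real.exp (∑ i, c i * x i - (∑ i, c i ^ 2) / 2) * h x ∂(stdGaussian n) = 0) :
    h =ᵐ[stdGaussian n] 0 := by
  have hint : Integrable h (stdGaussian n) := hh.integrable (by norm_num)
  have hprod : ∀ c : Fin n → ℝ,
      Integrable (fun x => Real.exp (∑ i, c i * x i) * h x) (stdGaussian n) := by
    intro c
    have := ((memLp_exp_stdGaussian n c).integrable_mul hh).const_mul
      (Real.exp ((∑ i, c i ^ 2) / 2))
    refine this.congr (Filter.Eventually.of_forall fun x => ?_)
    simp only [Pi.mul_apply]
    rw [← mul_assoc, ← Real.exp_add]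
    congr 2
    ring
  have hzero : ∀ c : Fin n → ℝ, ∫ x, Real.exp (∑ i, c i * x i) * h x ∂(stdGaussian n) = 0 := by
    intro c
    have e : ∀ x, Real.exp (∑ i, c i * x i) * h x = Real.exp ((∑ i, c i ^ 2) / 2) *
        (Real.exp (∑ i, c i * x i - (∑ i, c i ^ 2) / 2) * h x) := by
      intro x
      rw [← mul_assoc, ← Real.exp_add]
      congr 2
      ring
    simp only [e]
    rw [integral_const_mul, horth, mul_zero]
  have hmeas : AEMeasurable h (stdGaussian n) := hint.aemeasurable
  have hpm : AEMeasurable (fun x => ENNReal.ofReal (h x)) (stdGaussian n) := hmeas.ennreal_ofReal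
  have hnm : AEMeasurable (fun x => ENNReal.ofReal (-h x)) (stdGaussian n) :=
    hmeas.neg.ennreal_ofReal
  have hpos : ∀ c : Fin n → ℝ,
      Integrable (fun x => max (h x) 0 * Real.exp (∑ i, c i * x i)) (stdGaussian n) := by
    intro c
    refine (hprod c).pos_part.congr (Filter.Eventually.of_forall fun x => ?_)
    simp only
    rw [max_mul_of_nonneg _ _ (Real.exp_pos _).le, zero_mul, mul_comm]
  have hneg : ∀ c : Fin n → ℝ,
      Integrable (fun x => max (-h x) 0 * Real.exp (∑ i, c i * x i)) (stdGaussian n) := by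
    intro c
    refine (hprod c).neg_part.congr (Filter.Eventually.of_forall fun x => ?_)
    simp only
    rw [max_mul_of_nonneg _ _ (Real.exp_pos _).le, zero_mul, neg_mul, mul_comm]
  have : IsFiniteMeasure ((stdGaussian n).withDensity fun x => ENNReal.ofReal (h x)) :=
    isFiniteMeasure_withDensity_ofReal hint.2
  have : IsFiniteMeasure ((stdGaussian n).withDensity fun x => ENNReal.ofReal (-h x)) :=
    isFiniteMeasure_withDensity_ofReal hint.neg.2
  have key : (stdGaussian n).withDensity (fun x => ENNReal.ofReal (h x))
      = (stdGaussian n).withDensity (fun x => ENNReal.ofReal (-h x)) := by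
    apply measure_eq_of_laplace
    · intro c
      rw [integrable_withDensity_iff_integrable_smul₀' hpm (by simp)]
      simpa only [ENNReal.toReal_ofReal', smul_eq_mul] using hpos c
    · intro c
      rw [integral_withDensity_eq_integral_toReal_smul₀ hpm (by simp),
        integral_withDensity_eq_integral_toReal_smul₀ hnm (by simp)]
      simp only [ENNReal.toReal_ofReal', smul_eq_mul]
      rw [← sub_eq_zero, ← integral_sub (hpos c) (hneg c)]
      refine Eq.trans ?_ (hzero c)
      congr 1
      funext x
      rcases le_total (h x) 0 with hx | hx
      · rw [max_eq_right hx, max_eq_left (by linarith)]; ring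
      · rw [max_eq_left hx, max_eq_right (by linarith)]; ring
  rw [withDensity_eq_iff_of_sigmaFinite hpm hnm] at key
  filter_upwards [key] with x hx
  have hx' := congrArg ENNReal.toReal hx
  simp only [ENNReal.toReal_ofReal'] at hx'
  simp only [Pi.zero_apply]
  rcases le_total (h x) 0 with h1 | h1
  · rw [max_eq_right h1, max_eq_left (by linarith)] at hx'; linarith
  · rw [max_eq_left h1, max_eq_right (by linarith)] at hx'; linarith

/-- The closed span of the likelihood ratios in `L²` is everything. -/
lemma closure_span_L2 (n : ℕ) :
    (Submodule.span ℝ (Set.range fun c : Fin n → ℝ =>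
      (memLp_exp_stdGaussian n c).toLp)).topologicalClosure = ⊤ := by
  rw [Submodule.topologicalClosure_eq_top_iff, Submodule.eq_bot_iff]
  intro h hh
  rw [Submodule.mem_orthogonal] at hh
  rw [Lp.eq_zero_iff_ae_eq_zero]
  refine ae_zero_of_orth n h (Lp.memLp h) fun c => ?_
  have := hh _ (Submodule.subset_span ⟨c, rfl⟩)
  rw [L2.inner_def] at this
  rw [← this]
  refine integral_congr_ae ?_
  filter_upwards [(memLp_exp_stdGaussian n c).coeFn_toLp] with x hx
  simp only [hx]
  simp [mul_comm]

theorem gaussian_likelihood_ratios_span_dense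
    (n : ℕ) (f : (Fin n → ℝ) → ℝ) (hf : Integrable f (stdGaussian n))
    (ε : ℝ) (hε : 0 < ε) :
    ∃ g ∈ Submodule.span ℝ
      {h : (Fin n → ℝ) → ℝ | ∃ μ : Fin n → ℝ,
        h = fun x => Real.exp (∑ i, μ i * x i - (∑ i, μ i ^ 2) / 2)},
      ∫ x, |f x - g x| ∂(stdGaussian n) < ε := by
  obtain ⟨s, hs, hs1⟩ := (memLp_one_iff_integrable.2 hf).exists_simpleFunc_eLpNorm_sub_lt
    ENNReal.one_ne_top (ε := ENNReal.ofReal (ε / 2)) (by simpa using hε)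
  have hs2 : MemLp s 2 (stdGaussian n) := s.memLp_of_isFiniteMeasure _ _
  set C : ENNReal := stdGaussian n Set.univ ^ (1 / (1 : ENNReal).toReal - 1 / (2 : ENNReal).toReal)
    with hC
  have hCtop : C ≠ ⊤ := ENNReal.rpow_ne_top_of_nonneg (by norm_num) (measure_ne_top _ _)
  have hmem : hs2.toLp ∈ closure ((Submodule.span ℝ (Set.range fun c : Fin n → ℝ =>
      (memLp_exp_stdGaussian n c).toLp) : Submodule ℝ (Lp ℝ 2 (stdGaussian n))) :
        Set (Lp ℝ 2 (stdGaussian n))) := by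
    rw [← Submodule.topologicalClosure_coe, closure_span_L2]
    trivial
  have hδ : 0 < ε / 2 / (C.toReal + 1) := by positivity
  obtain ⟨k, hk, hsk⟩ := Metric.mem_closure_iff.1 hmem _ hδ
  have hrep : ∃ g ∈ Submodule.span ℝ
      {h : (Fin n → ℝ) → ℝ | ∃ μ : Fin n → ℝ,
        h = fun x => Real.exp (∑ i, μ i * x i - (∑ i, μ i ^ 2) / 2)}, k =ᵐ[stdGaussian n] g := by
    clear hsk
    induction hk using Submodule.span_induction with
    | mem y hy =>
      obtain ⟨c, rfl⟩ := hy
      exact ⟨_, Submodule.subset_span ⟨c, rfl⟩, (memLp_exp_stdGaussian n c).coeFn_toLp⟩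
    | zero => exact ⟨0, Submodule.zero_mem _, Lp.coeFn_zero _ _ _⟩
    | add y z _ _ hy hz =>
      obtain ⟨g, hg, hyg⟩ := hy
      obtain ⟨g', hg', hzg⟩ := hz
      exact ⟨g + g', Submodule.add_mem _ hg hg', (Lp.coeFn_add y z).trans (hyg.add hzg)⟩
    | smul a y _ hy =>
      obtain ⟨g, hg, hyg⟩ := hy
      exact ⟨a • g, Submodule.smul_mem _ a hg, (Lp.coeFn_smul a y).trans (hyg.const_smul a)⟩
  obtain ⟨g, hg, hkg⟩ := hrep
  refine ⟨g, hg, ?_⟩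
  have hg2 : MemLp g 2 (stdGaussian n) := (memLp_congr_ae hkg).1 (Lp.memLp k)
  have hg1 : Integrable g (stdGaussian n) := hg2.integrable (by norm_num)
  have hsi : Integrable s (stdGaussian n) := hs2.integrable (by norm_num)
  have n1 : ∀ u : (Fin n → ℝ) → ℝ, Integrable u (stdGaussian n) →
      ∫ x, |u x| ∂(stdGaussian n) = (eLpNorm u 1 (stdGaussian n)).toReal := by
    intro u hu
    rw [eLpNorm_one_eq_lintegral_enorm, ← integral_norm_eq_lintegral_enorm hu.1]
    simp only [Real.norm_eq_abs]
  have A : ∫ x, |f x - s x| ∂(stdGaussian n) < ε / 2 := by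
    have := n1 (f - ⇑s) (hf.sub hsi)
    simp only [Pi.sub_apply] at this
    rw [this]
    exact ENNReal.toReal_lt_of_lt_ofReal hs
  have B : ∫ x, |s x - g x| ∂(stdGaussian n) < ε / 2 := by
    have := n1 (⇑s - g) (hsi.sub hg1)
    simp only [Pi.sub_apply] at this
    rw [this]
    have e2 : (eLpNorm (⇑s - g) 2 (stdGaussian n)).toReal = dist hs2.toLp k := by
      rw [Lp.dist_def]
      congr 1
      refine eLpNorm_congr_ae ?_
      exact (hs2.coeFn_toLp.symm).sub hkg.symm
    have hle := eLpNorm_le_eLpNorm_mul_rpow_measure_univ (p := 1) (q := 2)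
      (by norm_num) (hsi.sub hg1).1
    have h3 : (eLpNorm (⇑s - g) 1 (stdGaussian n)).toReal ≤ dist hs2.toLp k * C.toReal := by
      rw [← e2, ← ENNReal.toReal_mul]
      exact ENNReal.toReal_mono (ENNReal.mul_ne_top (hs2.sub hg2).2.ne hCtop) hle
    have hCn : 0 ≤ C.toReal := ENNReal.toReal_nonneg
    rw [lt_div_iff₀ (by positivity)] at hsk
    have hd : 0 ≤ dist hs2.toLp k := dist_nonneg
    nlinarith
  calc ∫ x, |f x - g x| ∂(stdGaussian n)
      ≤ ∫ x, (|f x - s x| + |s x - g x|) ∂(stdGaussian n) :=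
        integral_mono (hf.sub hg1).abs ((hf.sub hsi).abs.add (hsi.sub hg1).abs)
          fun x => abs_sub_le _ _ _
    _ = _ := integral_add (hf.sub hsi).abs (hsi.sub hg1).abs
    _ < ε := by linarith
end
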